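/- Let C be a self-dual binary code of length n (n even) with minimum weight d, and let x ∈ F_2^n be a vector of even Hamming weight such that c·x = 1 for every codeword c of C of weight d. Then C_0 = {c ∈ C : c·x = 0} is a subcode of C of dimension n/2 − 1, the code D = C_0 + span{x} is a self-dual code of length n with dim(C ∩ D) = n/2 − 1 (so D is a self-dual neighbor of C), and D contains no codeword of C of weight d. -/

import Mathlib

/-- The standard inner product on `ι → ZMod 2`. -/
def dot {ι : Type*} [Fintype ι] (x y : ι → ZMod 2) : ZMod 2 := ∑ i, x i * y i

/-- A binary linear code is self-dual if it coincides with its dual. -/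
def IsSelfDual {ι : Type*} [Fintype ι] (C : Submodule (ZMod 2) (ι → ZMod 2)) : Prop :=
  ∀ x, x ∈ C ↔ ∀ y ∈ C, dot x y = 0

/-- `C` has minimum (nonzero) weight exactly `d`. -/
def MinWeightIs {ι : Type*} [Fintype ι] (C : Submodule (ZMod 2) (ι → ZMod 2)) (d : ℕ) : Prop :=
  (∃ x ∈ C, x ≠ 0 ∧ hammingNorm x = d) ∧ ∀ x ∈ C, x ≠ 0 → d ≤ hammingNorm x

/-- `A_i(C)`: the number of codewords of `C` of Hamming weight `i`. -/
noncomputable def weightEnum {ι : Type*} [Fintype ι] (C : Submodule (ZMod 2) (ι → ZMod 2)) (i : ℕ) : ℕ :=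
  Set.ncard {x : ι → ZMod 2 | x ∈ C ∧ hammingNorm x = i}

/-- Two codes are equivalent if a coordinate permutation maps one onto the other. -/
def CodeEquiv {ι : Type*} [Fintype ι] (C C' : Submodule (ZMod 2) (ι → ZMod 2)) : Prop :=
  ∃ σ : Equiv.Perm ι, Submodule.map (LinearMap.funLeft (ZMod 2) (ZMod 2) ⇑σ) C = C'

/-- The order of the automorphism group of a code: the number of coordinate
permutations mapping the code onto itself. -/
noncomputable def autGroupOrder {ι : Type*} [Fintype ι] (C : Submodule (ZMod 2) (ι → ZMod 2)) : ℕ :=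
  Nat.card {σ : Equiv.Perm ι // Submodule.map (LinearMap.funLeft (ZMod 2) (ZMod 2) ⇑σ) C = C}

/-- A circulant matrix: each row is the cyclic shift of the previous one. -/
def IsCirculant {n : ℕ} (R : Matrix (Fin n) (Fin n) (ZMod 2)) : Prop :=
  ∃ v : Fin n → ZMod 2, R = Matrix.circulant v

/-- The pure double circulant code with generator matrix `(I_n | R)`. -/
def pureDCC {n : ℕ} (R : Matrix (Fin n) (Fin n) (ZMod 2)) :
    Submodule (ZMod 2) (Fin n ⊕ Fin n → ZMod 2) :=
  Submodule.span (ZMod 2)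
    (Set.range fun i : Fin n =>
      Sum.elim (fun j => if j = i then (1 : ZMod 2) else 0) (R i))

/-- A bordered matrix: first row `(0,1,…,1)`, first column `(0,1,…,1)ᵀ`, and
lower-right block an `n × n` circulant matrix. -/
def IsBorderMatrix {n : ℕ} (B : Matrix (Fin (n + 1)) (Fin (n + 1)) (ZMod 2)) : Prop :=
  B 0 0 = 0 ∧ (∀ j, j ≠ 0 → B 0 j = 1) ∧ (∀ i, i ≠ 0 → B i 0 = 1) ∧
  ∃ R' : Matrix (Fin n) (Fin n) (ZMod 2), IsCirculant R' ∧
    ∀ i j : Fin n, B i.succ j.succ = R' i j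

/-- The bordered double circulant code with generator matrix `(I_{n+1} | B)`. -/
def borderedDCC {n : ℕ} (B : Matrix (Fin (n + 1)) (Fin (n + 1)) (ZMod 2)) :
    Submodule (ZMod 2) (Fin (n + 1) ⊕ Fin (n + 1) → ZMod 2) :=
  Submodule.span (ZMod 2)
    (Set.range fun i : Fin (n + 1) =>
      Sum.elim (fun j => if j = i then (1 : ZMod 2) else 0) (B i))

/-- The linear functional `c ↦ c · x`. -/
def dotL {ι : Type*} [Fintype ι] (x : ι → ZMod 2) : (ι → ZMod 2) →ₗ[ZMod 2] ZMod 2 where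
  toFun c := dot c x
  map_add' a b := by
    simp [dot, add_mul, Finset.sum_add_distrib]
  map_smul' r a := by
    simp [dot, Finset.mul_sum, mul_assoc]

theorem dot_comm' {ι : Type*} [Fintype ι] (a b : ι → ZMod 2) : dot a b = dot b a := by
  simp [dot, mul_comm]

theorem dot_add_left' {ι : Type*} [Fintype ι] (a b c : ι → ZMod 2) :
    dot (a + b) c = dot a c + dot b c := (dotL c).map_add a b

theorem dot_smul_left' {ι : Type*} [Fintype ι] (r : ZMod 2) (a c : ι → ZMod 2) :
    dot (r • a) c = r * dot a c := (dotL c).map_smul r a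

theorem dot_add_right' {ι : Type*} [Fintype ι] (a b c : ι → ZMod 2) :
    dot c (a + b) = dot c a + dot c b := by
  rw [dot_comm', dot_add_left', dot_comm' a, dot_comm' b]

theorem dot_smul_right' {ι : Type*} [Fintype ι] (r : ZMod 2) (a c : ι → ZMod 2) :
    dot c (r • a) = r * dot c a := by
  rw [dot_comm', dot_smul_left', dot_comm' a]

theorem dot_self' {ι : Type*} [Fintype ι] (x : ι → ZMod 2) :
    dot x x = (hammingNorm x : ZMod 2) := by
  have h : ∀ a : ZMod 2, a * a = if a ≠ 0 then 1 else 0 := by decide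
  simp only [dot, h, hammingNorm]
  rw [Finset.sum_boole]

theorem zmod2_cases (a : ZMod 2) : a = 0 ∨ a = 1 := by
  revert a; decide

def dotB (n : ℕ) : LinearMap.BilinForm (ZMod 2) (Fin n → ZMod 2) :=
  LinearMap.mk₂ (ZMod 2) dot (fun a b c => dot_add_left' a b c)
    (fun r a c => dot_smul_left' r a c) (fun c a b => dot_add_right' a b c)
    (fun r c a => dot_smul_right' r a c)

theorem dotB_apply {n : ℕ} (a b : Fin n → ZMod 2) : dotB n a b = dot a b := rfl

theorem finrank_selfDual {n : ℕ} (C : Submodule (ZMod 2) (Fin n → ZMod 2))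
    (hC : IsSelfDual C) : Module.finrank (ZMod 2) C + Module.finrank (ZMod 2) C = n := by
  have hl : ∀ a : Fin n → ZMod 2, (∀ b, dot a b = 0) → a = 0 := by
    intro a h
    funext i
    simpa [dot, Pi.single_apply] using h (Pi.single i 1)
  have hnd : (dotB n).Nondegenerate :=
    ⟨fun a h => hl a h, fun a h => hl a fun b => by rw [dot_comm']; exact h b⟩
  have ho : (dotB n).orthogonal C = C := by
    ext y
    rw [LinearMap.BilinForm.mem_orthogonal_iff, hC y]
    simp only [dotB_apply, dot_comm' y]
  have h1 := LinearMap.BilinForm.finrank_orthogonal hnd C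
  have h2 := Submodule.finrank_le C
  rw [ho] at h1
  simp only [Module.finrank_fin_fun] at h1 h2
  omega

theorem neighbor_construction {n : ℕ} (hn : Even n)
    (C : Submodule (ZMod 2) (Fin n → ZMod 2)) (d : ℕ)
    (hC : IsSelfDual C) (hd : MinWeightIs C d)
    (x : Fin n → ZMod 2) (hx : Even (hammingNorm x))
    (hdot : ∀ c ∈ C, hammingNorm c = d → dot c x = 1) :
    Module.finrank (ZMod 2) ↥(C ⊓ LinearMap.ker (dotL x)) = n / 2 - 1 ∧
    IsSelfDual ((C ⊓ LinearMap.ker (dotL x)) ⊔ Submodule.span (ZMod 2) {x}) ∧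
    Module.finrank (ZMod 2)
      ↥(C ⊓ ((C ⊓ LinearMap.ker (dotL x)) ⊔ Submodule.span (ZMod 2) {x})) = n / 2 - 1 ∧
    ∀ c ∈ C, hammingNorm c = d →
      c ∉ (C ⊓ LinearMap.ker (dotL x)) ⊔ Submodule.span (ZMod 2) {x} := by
  obtain ⟨⟨c0, hc0, -, hc0d⟩, -⟩ := hd
  have h0 : dot c0 x = 1 := hdot c0 hc0 hc0d
  have hxx : dot x x = 0 := by
    rw [dot_self']
    exact (ZMod.natCast_eq_zero_iff_even).2 hx
  have hmem0 : ∀ c, c ∈ C ⊓ LinearMap.ker (dotL x) ↔ c ∈ C ∧ dot c x = 0 := fun c => Iff.rfl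
  have hmemD : ∀ y, y ∈ (C ⊓ LinearMap.ker (dotL x)) ⊔ Submodule.span (ZMod 2) {x} ↔
      ∃ c, (c ∈ C ∧ dot c x = 0) ∧ ∃ r : ZMod 2, c + r • x = y := by
    intro y
    rw [Submodule.mem_sup]
    constructor
    · rintro ⟨c, hc, z, hz, rfl⟩
      obtain ⟨r, rfl⟩ := Submodule.mem_span_singleton.1 hz
      exact ⟨c, hc, r, rfl⟩
    · rintro ⟨c, hc, r, rfl⟩
      exact ⟨c, hc, r • x, Submodule.smul_mem _ _ (Submodule.mem_span_singleton_self x), rfl⟩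
  have hDx : ∀ y ∈ (C ⊓ LinearMap.ker (dotL x)) ⊔ Submodule.span (ZMod 2) {x}, dot y x = 0 := by
    intro y hy
    obtain ⟨c, ⟨-, hc⟩, r, rfl⟩ := (hmemD y).1 hy
    rw [dot_add_left', dot_smul_left', hc, hxx]; simp
  have hinf : C ⊓ ((C ⊓ LinearMap.ker (dotL x)) ⊔ Submodule.span (ZMod 2) {x})
      = C ⊓ LinearMap.ker (dotL x) :=
    le_antisymm (fun y hy => ⟨hy.1, hDx y hy.2⟩) (le_inf inf_le_left le_sup_left)
  have hrank : Module.finrank (ZMod 2) ↥(C ⊓ LinearMap.ker (dotL x)) = n / 2 - 1 := by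
    have h1 := finrank_selfDual C hC
    have hne : (dotL x).domRestrict C ≠ 0 := by
      intro h
      have h2 : dot c0 x = 0 := LinearMap.congr_fun h ⟨c0, hc0⟩
      rw [h0] at h2
      exact one_ne_zero h2
    have h3 := Module.Dual.finrank_ker_add_one_of_ne_zero hne
    have h4 : (LinearMap.ker ((dotL x).domRestrict C)).map C.subtype
        = C ⊓ LinearMap.ker (dotL x) := by
      rw [LinearMap.ker_domRestrict, Submodule.map_comap_subtype]
    have h5 := Submodule.finrank_map_subtype_eq C (LinearMap.ker ((dotL x).domRestrict C))
    rw [h4] at h5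
    omega
  refine ⟨hrank, ?_, by rw [hinf]; exact hrank, ?_⟩
  · intro y
    constructor
    · intro hy z hz
      have hyx := hDx y hy
      obtain ⟨c, ⟨hc, hcx⟩, r, rfl⟩ := (hmemD y).1 hy
      obtain ⟨e, ⟨he, hex⟩, s, rfl⟩ := (hmemD z).1 hz
      rw [dot_add_right', dot_smul_right', hyx, dot_add_left', dot_smul_left',
        (hC c).1 hc e he, dot_comm' x e, hex]
      simp
    · intro h
      have hyx : dot y x = 0 :=
        h x (Submodule.mem_sup_right (Submodule.mem_span_singleton_self x))
      have hy0 : ∀ c ∈ C, dot c x = 0 → dot y c = 0 := fun c hc hcx =>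
        h c (Submodule.mem_sup_left ⟨hc, hcx⟩)
      have key : ∀ w, dot w c0 = 0 → (∀ c ∈ C, dot c x = 0 → dot w c = 0) → w ∈ C := by
        intro w hw hw0
        rw [hC w]
        intro c hc
        rcases zmod2_cases (dot c x) with h1 | h1
        · exact hw0 c hc h1
        · have h2 := hw0 (c + c0) (C.add_mem hc hc0) (by
            rw [dot_add_left', h1, h0]; decide)
          rwa [dot_add_right', hw, add_zero] at h2
      rcases zmod2_cases (dot y c0) with h1 | h1
      · exact Submodule.mem_sup_left ⟨key y h1 hy0, hyx⟩
      · have h2 : y + x ∈ C := by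
          apply key
          · rw [dot_add_left', h1, dot_comm' x, h0]; decide
          · intro c hc hcx
            rw [dot_add_left', hy0 c hc hcx, dot_comm' x, hcx, add_zero]
        refine (hmemD y).2 ⟨y + x, ⟨h2, by rw [dot_add_left', hyx, hxx, add_zero]⟩, 1, ?_⟩
        have h3 : x + x = 0 := funext fun i => CharTwo.add_self_eq_zero (x i)
        rw [one_smul, add_assoc, h3, add_zero]
  · intro c hc hcd hcD
    have h1 := hdot c hc hcd
    rw [hDx c hcD] at h1
    exact zero_ne_one h1
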